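/- Let H be a quasi-Hopf algebra, B a right H-comodule algebra, and v : H → B a morphism of right H-comodule algebras. Define E : B → B by E(b) = v(q¹)b₍₀₎v(βS(q²b₍₁₎)), set A = E(B), h▷b = E(v(h)b), and a*a′ = E(aa′) for a, a′ ∈ A. Then for all a, a′ ∈ A: a*a′ = v(q¹)(t¹▷a)v(t²)(z¹▷a′)v(z²βS(q²t³z³)), where t¹⊗t²⊗t³ and z¹⊗z²⊗z³ are two copies of Φ⁻¹. -/

import Mathlib

open TensorProduct BigOperators

/-- A quasi-bialgebra in the sense of Drinfeld. -/
structure QuasiBialgebra (k H : Type*) [Field k] [Ring H] [Algebra k H] where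
  comul : H →ₐ[k] H ⊗[k] H
  counit : H →ₐ[k] k
  Phi : H ⊗[k] (H ⊗[k] H)
  PhiInv : H ⊗[k] (H ⊗[k] H)
  Phi_mul_inv : Phi * PhiInv = 1
  inv_mul_Phi : PhiInv * Phi = 1
  comul_coassoc : ∀ h : H,
    (Algebra.TensorProduct.map (AlgHom.id k H) comul) (comul h)
      = Phi * (Algebra.TensorProduct.assoc k k k H H H)
          ((Algebra.TensorProduct.map comul (AlgHom.id k H)) (comul h)) * PhiInv
  counit_comul_right : ∀ h : H,
    (Algebra.TensorProduct.map (AlgHom.id k H) counit) (comul h) = h ⊗ₜ[k] (1 : k)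
  counit_comul_left : ∀ h : H,
    (Algebra.TensorProduct.map counit (AlgHom.id k H)) (comul h) = (1 : k) ⊗ₜ[k] h
  pentagon :
    ((1 : H) ⊗ₜ[k] Phi)
      * (Algebra.TensorProduct.map (AlgHom.id k H)
          (((Algebra.TensorProduct.assoc k k k H H H).toAlgHom).comp
            (Algebra.TensorProduct.map comul (AlgHom.id k H)))) Phi
      * (Algebra.TensorProduct.map (AlgHom.id k H)
          (Algebra.TensorProduct.map (AlgHom.id k H)
            (Algebra.TensorProduct.includeLeft : H →ₐ[k] H ⊗[k] H))) Phi
    = (Algebra.TensorProduct.map (AlgHom.id k H)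
          (Algebra.TensorProduct.map (AlgHom.id k H) comul)) Phi
      * (Algebra.TensorProduct.assoc k k k H H (H ⊗[k] H))
          ((Algebra.TensorProduct.map comul (AlgHom.id k (H ⊗[k] H))) Phi)
  counit_Phi : (Algebra.TensorProduct.map (AlgHom.id k H)
      (Algebra.TensorProduct.map counit (AlgHom.id k H))) Phi = 1

/-- A quasi-Hopf algebra: a quasi-bialgebra with antipode `S` (a bijective algebra
anti-automorphism with inverse `Sinv`) and elements `alpha`, `beta`, normalized so that
`counit alpha = counit beta = 1`.  Identities involving Sweedler components are stated
universally over all finite representations of the relevant tensors. -/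
structure QuasiHopfAlgebra (k H : Type*) [Field k] [Ring H] [Algebra k H] extends
    QuasiBialgebra k H where
  alpha : H
  beta : H
  S : H →ₗ[k] H
  Sinv : H →ₗ[k] H
  S_one : S 1 = 1
  S_mul : ∀ a b : H, S (a * b) = S b * S a
  Sinv_S : ∀ h : H, Sinv (S h) = h
  S_Sinv : ∀ h : H, S (Sinv h) = h
  antipode_left : ∀ h : H, ∀ (n : ℕ) (d1 d2 : Fin n → H),
    comul h = ∑ i, d1 i ⊗ₜ[k] d2 i →
    ∑ i, S (d1 i) * alpha * d2 i = counit h • alpha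
  antipode_right : ∀ h : H, ∀ (n : ℕ) (d1 d2 : Fin n → H),
    comul h = ∑ i, d1 i ⊗ₜ[k] d2 i →
    ∑ i, d1 i * beta * S (d2 i) = counit h • beta
  antipode_Phi : ∀ (n : ℕ) (X1 X2 X3 : Fin n → H),
    Phi = ∑ i, X1 i ⊗ₜ[k] (X2 i ⊗ₜ[k] X3 i) →
    ∑ i, X1 i * beta * S (X2 i) * alpha * X3 i = 1
  antipode_PhiInv : ∀ (n : ℕ) (x1 x2 x3 : Fin n → H),
    PhiInv = ∑ i, x1 i ⊗ₜ[k] (x2 i ⊗ₜ[k] x3 i) →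
    ∑ i, S (x1 i) * alpha * x2 i * beta * S (x3 i) = 1
  counit_alpha : counit alpha = 1
  counit_beta : counit beta = 1
/-- A right `H`-comodule algebra over a quasi-bialgebra `Q`. -/
structure RightComoduleAlgebra {k H : Type*} [Field k] [Ring H] [Algebra k H]
    (Q : QuasiBialgebra k H) (B : Type*) [Ring B] [Algebra k B] where
  coact : B →ₐ[k] B ⊗[k] H
  PhiRho : B ⊗[k] (H ⊗[k] H)
  PhiRhoInv : B ⊗[k] (H ⊗[k] H)
  PhiRho_mul_inv : PhiRho * PhiRhoInv = 1
  inv_mul_PhiRho : PhiRhoInv * PhiRho = 1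
  coact_coassoc : ∀ b : B,
    PhiRho * (Algebra.TensorProduct.assoc k k k B H H)
        ((Algebra.TensorProduct.map coact (AlgHom.id k H)) (coact b))
      = (Algebra.TensorProduct.map (AlgHom.id k B) Q.comul) (coact b) * PhiRho
  pentagon :
    ((1 : B) ⊗ₜ[k] Q.Phi)
      * (Algebra.TensorProduct.map (AlgHom.id k B)
          (((Algebra.TensorProduct.assoc k k k H H H).toAlgHom).comp
            (Algebra.TensorProduct.map Q.comul (AlgHom.id k H)))) PhiRho
      * (Algebra.TensorProduct.map (AlgHom.id k B)
          (Algebra.TensorProduct.map (AlgHom.id k H)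
            (Algebra.TensorProduct.includeLeft : H →ₐ[k] H ⊗[k] H))) PhiRho
    = (Algebra.TensorProduct.map (AlgHom.id k B)
          (Algebra.TensorProduct.map (AlgHom.id k H) Q.comul)) PhiRho
      * (Algebra.TensorProduct.assoc k k k B H (H ⊗[k] H))
          ((Algebra.TensorProduct.map coact (AlgHom.id k (H ⊗[k] H))) PhiRho)
  counit_coact : ∀ b : B,
    (Algebra.TensorProduct.map (AlgHom.id k B) Q.counit) (coact b) = b ⊗ₜ[k] (1 : k)
  counit_PhiRho_mid : (Algebra.TensorProduct.map (AlgHom.id k B)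
      (Algebra.TensorProduct.map Q.counit (AlgHom.id k H))) PhiRho = 1
  counit_PhiRho_right : (Algebra.TensorProduct.map (AlgHom.id k B)
      (Algebra.TensorProduct.map (AlgHom.id k H) Q.counit)) PhiRho = 1

/-- `v : H → B` is a morphism of right `H`-comodule algebras from `H` (with its canonical
right `H`-comodule algebra structure `ρ = Δ`, `Φ_ρ = Φ`) to `B`. -/
def IsComodAlgMorphismFromH {k H B : Type*} [Field k] [Ring H] [Algebra k H]
    [Ring B] [Algebra k B] {Q : QuasiBialgebra k H}
    (R : RightComoduleAlgebra Q B) (v : H →ₐ[k] B) : Prop :=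
  (∀ h : H, R.coact (v h) = (Algebra.TensorProduct.map v (AlgHom.id k H)) (Q.comul h))
  ∧ R.PhiRho = (Algebra.TensorProduct.map v (AlgHom.id k (H ⊗[k] H))) Q.Phi

/-- Characterization of the canonical projection `E : B → B`,
`E(b) = v(q¹) b₍₀₎ v(β S(q² b₍₁₎))`, where `q_R = q¹ ⊗ q² = X¹ ⊗ S⁻¹(α X³) X²`,
stated universally over finite representations of `Φ` and of `ρ(b)`. -/
def IsCanonicalProjection {k H B : Type*} [Field k] [Ring H] [Algebra k H]
    [Ring B] [Algebra k B] (Q : QuasiHopfAlgebra k H)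
    (R : RightComoduleAlgebra Q.toQuasiBialgebra B) (v : H →ₐ[k] B) (E : B →ₗ[k] B) : Prop :=
  ∀ (b : B) (n : ℕ) (X1 X2 X3 : Fin n → H),
    Q.Phi = ∑ i, X1 i ⊗ₜ[k] (X2 i ⊗ₜ[k] X3 i) →
    ∀ (p : ℕ) (b0 : Fin p → B) (b1 : Fin p → H),
      R.coact b = ∑ j, b0 j ⊗ₜ[k] b1 j →
      E b = ∑ i, ∑ j,
        v (X1 i) * b0 j * v (Q.beta * Q.S (Q.Sinv (Q.alpha * X3 i) * X2 i * b1 j))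

section Helpers

theorem aux_ind3 {k M N P : Type*} [Field k] [AddCommGroup M] [Module k M] [AddCommGroup N]
    [Module k N] [AddCommGroup P] [Module k P] {C : M ⊗[k] (N ⊗[k] P) → Prop}
    (zero : C 0) (tmul : ∀ a b c, C (a ⊗ₜ[k] (b ⊗ₜ[k] c)))
    (add : ∀ x y, C x → C y → C (x + y)) (x : M ⊗[k] (N ⊗[k] P)) : C x := by
  induction x using TensorProduct.induction_on with
  | zero => exact zero
  | add x y hx hy => exact add x y hx hy
  | tmul a t =>
    induction t using TensorProduct.induction_on with
    | zero => simpa using zero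
    | add x y hx hy => rw [TensorProduct.tmul_add]; exact add _ _ hx hy
    | tmul b c => exact tmul a b c

theorem aux_rep3 {k M N P : Type*} [Field k] [AddCommGroup M] [Module k M] [AddCommGroup N]
    [Module k N] [AddCommGroup P] [Module k P] (x : M ⊗[k] (N ⊗[k] P)) :
    ∃ (n : ℕ) (a : Fin n → M) (b : Fin n → N) (c : Fin n → P),
      x = ∑ i, a i ⊗ₜ[k] (b i ⊗ₜ[k] c i) := by
  induction x using aux_ind3 with
  | zero => exact ⟨0, Fin.elim0, Fin.elim0, Fin.elim0, by simp⟩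
  | tmul a b c => exact ⟨1, fun _ => a, fun _ => b, fun _ => c, by simp⟩
  | add x y hx hy =>
    obtain ⟨n, a, b, c, rfl⟩ := hx
    obtain ⟨m, a', b', c', rfl⟩ := hy
    exact ⟨n + m, Fin.append a a', Fin.append b b', Fin.append c c', by
      simp [Fin.sum_univ_add]⟩

variable {k H B : Type*} [Field k] [Ring H] [Algebra k H] [Ring B] [Algebra k B]

/-- `a ⊗ b ↦ S(a) α b`. -/
noncomputable def auxDL (Q : QuasiHopfAlgebra k H) : H ⊗[k] H →ₗ[k] H :=
  TensorProduct.lift (LinearMap.mk₂ k (fun a b => Q.S a * Q.alpha * b)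
    (by simp [add_mul]) (by simp) (by simp [mul_add]) (by simp))

/-- `a ⊗ b ↦ a β S(b)`. -/
noncomputable def auxDR (Q : QuasiHopfAlgebra k H) : H ⊗[k] H →ₗ[k] H :=
  TensorProduct.lift (LinearMap.mk₂ k (fun a b => a * Q.beta * Q.S b)
    (by simp [add_mul]) (by simp) (by simp [mul_add]) (by simp))

/-- `b ⊗ x ⊗ y ↦ b v(β S(x) α y)`. -/
noncomputable def auxD3 (Q : QuasiHopfAlgebra k H) (v : H →ₐ[k] B) :
    B ⊗[k] (H ⊗[k] H) →ₗ[k] B :=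
  TensorProduct.lift ((LinearMap.mul k B).compl₂
    (v.toLinearMap ∘ₗ LinearMap.mulLeft k Q.beta ∘ₗ auxDL Q))

theorem auxDL_tmul (Q : QuasiHopfAlgebra k H) (a b : H) :
    auxDL Q (a ⊗ₜ[k] b) = Q.S a * Q.alpha * b := by simp [auxDL]

theorem auxDR_tmul (Q : QuasiHopfAlgebra k H) (a b : H) :
    auxDR Q (a ⊗ₜ[k] b) = a * Q.beta * Q.S b := by simp [auxDR]

theorem auxD3_tmul' (Q : QuasiHopfAlgebra k H) (v : H →ₐ[k] B) (b : B) (t : H ⊗[k] H) :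
    auxD3 Q v (b ⊗ₜ[k] t) = b * v (Q.beta * auxDL Q t) := by
  simp [auxD3]

theorem auxD3_tmul (Q : QuasiHopfAlgebra k H) (v : H →ₐ[k] B) (b : B) (x y : H) :
    auxD3 Q v (b ⊗ₜ[k] (x ⊗ₜ[k] y)) = b * v (Q.beta * (Q.S x * Q.alpha * y)) := by
  rw [auxD3_tmul', auxDL_tmul]

theorem auxDL_comul (Q : QuasiHopfAlgebra k H) (h : H) :
    auxDL Q (Q.comul h) = Q.counit h • Q.alpha := by
  obtain ⟨n, d1, d2, hd⟩ := TensorProduct.exists_sum_tmul_eq (Q.comul h)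
  rw [← Q.antipode_left h n d1 d2 hd, hd]
  simp [auxDL_tmul]

theorem auxDR_comul (Q : QuasiHopfAlgebra k H) (h : H) :
    auxDR Q (Q.comul h) = Q.counit h • Q.beta := by
  obtain ⟨n, d1, d2, hd⟩ := TensorProduct.exists_sum_tmul_eq (Q.comul h)
  rw [← Q.antipode_right h n d1 d2 hd, hd]
  simp [auxDR_tmul]

theorem auxD3_Phi (Q : QuasiHopfAlgebra k H) : auxD3 Q (AlgHom.id k H) Q.Phi = 1 := by
  obtain ⟨n, a, b, c, h⟩ := aux_rep3 Q.Phi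
  rw [← Q.antipode_Phi n a b c h, h]
  simp [auxD3_tmul, mul_assoc]

theorem auxD3_PhiRho (Q : QuasiHopfAlgebra k H)
    (R : RightComoduleAlgebra Q.toQuasiBialgebra B)
    (v : H →ₐ[k] B) (hv : IsComodAlgMorphismFromH R v) : auxD3 Q v R.PhiRho = 1 := by
  have key : ∀ T : H ⊗[k] (H ⊗[k] H),
      auxD3 Q v (Algebra.TensorProduct.map v (AlgHom.id k (H ⊗[k] H)) T)
        = v (auxD3 Q (AlgHom.id k H) T) := by
    intro T
    induction T using aux_ind3 with
    | zero => simp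
    | add x y hx hy => simp only [map_add, hx, hy]
    | tmul a b c => simp [auxD3_tmul]
  rw [hv.2, key, auxD3_Phi, map_one]

/-- `b ⊗ h ↦ b ⊗ h ⊗ 1`. -/
noncomputable def auxJ (k H B : Type*) [Field k] [Ring H] [Algebra k H] [Ring B] [Algebra k B] :
    B ⊗[k] H →ₐ[k] B ⊗[k] (H ⊗[k] H) :=
  Algebra.TensorProduct.map (AlgHom.id k B) Algebra.TensorProduct.includeLeft

theorem auxJ_tmul (b : B) (h : H) : auxJ k H B (b ⊗ₜ[k] h) = b ⊗ₜ[k] (h ⊗ₜ[k] 1) := by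
  simp [auxJ]

theorem auxE_eq (Q : QuasiHopfAlgebra k H)
    (R : RightComoduleAlgebra Q.toQuasiBialgebra B)
    (v : H →ₐ[k] B) (hv : IsComodAlgMorphismFromH R v)
    (E : B →ₗ[k] B) (hE : IsCanonicalProjection Q R v E) (b : B) :
    E b = auxD3 Q v (R.PhiRho * auxJ k H B (R.coact b)) := by
  obtain ⟨n, x1, x2, x3, h⟩ := aux_rep3 Q.Phi
  obtain ⟨m, d1, d2, hd⟩ := TensorProduct.exists_sum_tmul_eq (R.coact b)
  rw [hE b n x1 x2 x3 h m d1 d2 hd, hv.2, h, hd]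
  simp [auxD3_tmul, auxJ_tmul, Finset.sum_mul, Finset.mul_sum, Q.S_mul, Q.S_Sinv, mul_assoc]
  try rw [Finset.sum_comm]

theorem aux_counit_S (Q : QuasiHopfAlgebra k H) (h : H) : Q.counit (Q.S h) = Q.counit h := by
  have h1 := congrArg Q.counit (auxDL_comul Q h)
  have key : ∀ T : H ⊗[k] H, Q.counit (auxDL Q T) =
      Q.counit (Q.S (Algebra.TensorProduct.rid k k H
        (Algebra.TensorProduct.map (AlgHom.id k H) Q.counit T))) := by
    intro T
    induction T using TensorProduct.induction_on with
    | zero => simp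
    | add x y hx hy => simp only [map_add, hx, hy]
    | tmul a b => simp [auxDL_tmul, Q.counit_alpha, mul_comm]
  rw [key, Q.counit_comul_right] at h1
  simpa [Q.counit_alpha] using h1

/-- `ε ⊗ id` followed by `k ⊗ M = M`. -/
noncomputable def auxEps1 (Q : QuasiHopfAlgebra k H) (M : Type*) [Ring M] [Algebra k M] :
    H ⊗[k] M →ₐ[k] M :=
  (Algebra.TensorProduct.lid k M).toAlgHom.comp
    (Algebra.TensorProduct.map Q.counit (AlgHom.id k M))

theorem auxEps1_tmul (Q : QuasiHopfAlgebra k H) {M : Type*} [Ring M] [Algebra k M]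
    (h : H) (m : M) : auxEps1 Q M (h ⊗ₜ[k] m) = Q.counit h • m := by
  simp [auxEps1]

theorem auxEps1_comul (Q : QuasiHopfAlgebra k H) (h : H) :
    auxEps1 Q H (Q.comul h) = h := by
  simp [auxEps1, Q.counit_comul_left]

/-- The counit applied to the first leg of the reassociator. -/
theorem auxEps1_Phi (Q : QuasiHopfAlgebra k H) : auxEps1 Q (H ⊗[k] H) Q.Phi = 1 := by
  have hp := congrArg (fun T => auxEps1 Q _ (auxEps1 Q _ T)) Q.pentagon
  simp only [map_mul] at hp
  have hmid : auxEps1 Q H (auxEps1 Q (H ⊗[k] H) Q.Phi) = 1 := by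
    have h0 := congrArg (fun T => auxEps1 Q H (Algebra.TensorProduct.map (AlgHom.id k H)
      (Algebra.TensorProduct.lid k H).toAlgHom T)) Q.counit_Phi
    have key : ∀ T : H ⊗[k] (H ⊗[k] H), auxEps1 Q H (auxEps1 Q (H ⊗[k] H) T) =
        auxEps1 Q H (Algebra.TensorProduct.map (AlgHom.id k H)
          (Algebra.TensorProduct.lid k H).toAlgHom (Algebra.TensorProduct.map (AlgHom.id k H)
      (Algebra.TensorProduct.map Q.counit (AlgHom.id k H)) T)) := by
      intro T
      induction T using aux_ind3 with
      | zero => simp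
      | add x y hx hy => simp only [map_add, hx, hy]
      | tmul a b c =>
        simp [auxEps1_tmul]
        exact smul_comm _ _ _
    rw [key]
    simpa using h0
  have e1 : auxEps1 Q (H ⊗[k] H) (auxEps1 Q (H ⊗[k] (H ⊗[k] H)) ((1 : H) ⊗ₜ[k] Q.Phi))
      = auxEps1 Q (H ⊗[k] H) Q.Phi := by
    rw [auxEps1_tmul]; simp
  have e2 : ∀ T : H ⊗[k] (H ⊗[k] H),
      auxEps1 Q (H ⊗[k] H) (auxEps1 Q (H ⊗[k] (H ⊗[k] H))
      ((Algebra.TensorProduct.map (AlgHom.id k H)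
          (((Algebra.TensorProduct.assoc k k k H H H).toAlgHom).comp
            (Algebra.TensorProduct.map Q.comul (AlgHom.id k H)))) T))
      = auxEps1 Q (H ⊗[k] H) T := by
    have key : ∀ (U : H ⊗[k] H) (c : H), auxEps1 Q (H ⊗[k] H)
        (Algebra.TensorProduct.assoc k k k H H H (U ⊗ₜ[k] c)) = auxEps1 Q H U ⊗ₜ[k] c := by
      intro U c
      induction U using TensorProduct.induction_on with
      | zero => simp
      | add x y hx hy => simp only [map_add, TensorProduct.add_tmul, hx, hy]
      | tmul a b => simp [auxEps1_tmul, TensorProduct.smul_tmul']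
    intro T
    induction T using aux_ind3 with
    | zero => simp
    | add x y hx hy => simp only [map_add, hx, hy]
    | tmul a b c => simp [auxEps1_tmul, key, auxEps1_comul]
  have e3 : ∀ T : H ⊗[k] (H ⊗[k] H),
      auxEps1 Q (H ⊗[k] H) (auxEps1 Q (H ⊗[k] (H ⊗[k] H))
      ((Algebra.TensorProduct.map (AlgHom.id k H)
          (Algebra.TensorProduct.map (AlgHom.id k H)
            (Algebra.TensorProduct.includeLeft : H →ₐ[k] H ⊗[k] H))) T))
      = auxEps1 Q H (auxEps1 Q (H ⊗[k] H) T) ⊗ₜ[k] 1 := by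
    intro T
    induction T using aux_ind3 with
    | zero => simp
    | add x y hx hy => simp only [map_add, TensorProduct.add_tmul, hx, hy]
    | tmul a b c => simp [auxEps1_tmul, TensorProduct.smul_tmul']
  have e4 : ∀ T : H ⊗[k] (H ⊗[k] H),
      auxEps1 Q (H ⊗[k] H) (auxEps1 Q (H ⊗[k] (H ⊗[k] H))
      ((Algebra.TensorProduct.map (AlgHom.id k H)
          (Algebra.TensorProduct.map (AlgHom.id k H) Q.comul)) T))
      = Q.comul (auxEps1 Q H (auxEps1 Q (H ⊗[k] H) T)) := by
    intro T
    induction T using aux_ind3 with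
    | zero => simp
    | add x y hx hy => simp only [map_add, hx, hy]
    | tmul a b c => simp [auxEps1_tmul]
  have e5 : ∀ T : H ⊗[k] (H ⊗[k] H),
      auxEps1 Q (H ⊗[k] H) (auxEps1 Q (H ⊗[k] (H ⊗[k] H))
      ((Algebra.TensorProduct.assoc k k k H H (H ⊗[k] H))
          ((Algebra.TensorProduct.map Q.comul (AlgHom.id k (H ⊗[k] H))) T)))
      = auxEps1 Q (H ⊗[k] H) T := by
    have key : ∀ (U : H ⊗[k] H) (c : H ⊗[k] H), auxEps1 Q (H ⊗[k] (H ⊗[k] H))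
        (Algebra.TensorProduct.assoc k k k H H (H ⊗[k] H) (U ⊗ₜ[k] c))
        = auxEps1 Q H U ⊗ₜ[k] c := by
      intro U c
      induction U using TensorProduct.induction_on with
      | zero => simp
      | add x y hx hy => simp only [map_add, TensorProduct.add_tmul, hx, hy]
      | tmul a b => simp [auxEps1_tmul, TensorProduct.smul_tmul']
    intro T
    induction T using aux_ind3 with
    | zero => simp
    | add x y hx hy => simp only [map_add, hx, hy]
    | tmul a b c => simp [auxEps1_tmul, key, auxEps1_comul]
  rw [e1, e2, e3, e4, e5, hmid, map_one, one_mul, ← Algebra.TensorProduct.one_def, mul_one] at hp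
  have hu : auxEps1 Q (H ⊗[k] H) Q.Phi * auxEps1 Q (H ⊗[k] H) Q.PhiInv = 1 := by
    rw [← map_mul, Q.Phi_mul_inv, map_one]
  calc auxEps1 Q (H ⊗[k] H) Q.Phi
      = auxEps1 Q (H ⊗[k] H) Q.Phi * auxEps1 Q (H ⊗[k] H) Q.Phi
          * auxEps1 Q (H ⊗[k] H) Q.PhiInv := by rw [mul_assoc, hu, mul_one]
    _ = 1 := by rw [hp, hu]


theorem auxD3_right (Q : QuasiHopfAlgebra k H) (v : H →ₐ[k] B) (h : H)
    (T : B ⊗[k] (H ⊗[k] H)) :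
    auxD3 Q v (T * auxJ k H B (Algebra.TensorProduct.map v (AlgHom.id k H) (Q.comul h)))
      = Q.counit h • auxD3 Q v T := by
  have key : ∀ (U : H ⊗[k] H) (c : B) (x y : H),
      auxD3 Q v ((c ⊗ₜ[k] (x ⊗ₜ[k] y))
        * auxJ k H B (Algebra.TensorProduct.map v (AlgHom.id k H) U))
        = c * v (auxDR Q U * (Q.S x * Q.alpha * y)) := by
    intro U c x y
    induction U using TensorProduct.induction_on with
    | zero => simp
    | add x y hx hy => simp only [map_add, mul_add, add_mul, hx, hy]
    | tmul p r => simp [auxJ_tmul, auxD3_tmul, auxDR_tmul, Q.S_mul, mul_assoc]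
  induction T using aux_ind3 with
  | zero => simp
  | add x y hx hy => simp only [map_add, add_mul, smul_add, hx, hy]
  | tmul c x y => rw [key, auxDR_comul]; simp [auxD3_tmul]

theorem auxD3_right_id (Q : QuasiHopfAlgebra k H) (h : H) (T : H ⊗[k] (H ⊗[k] H)) :
    auxD3 Q (AlgHom.id k H) (T * auxJ k H H (Q.comul h))
      = Q.counit h • auxD3 Q (AlgHom.id k H) T := by
  have := auxD3_right Q (AlgHom.id k H) h T
  rwa [Algebra.TensorProduct.map_id, AlgHom.id_apply] at this

/-- Property (a): `E(b v(h)) = ε(h) E(b)`. -/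
theorem auxE_mul_v (Q : QuasiHopfAlgebra k H)
    (R : RightComoduleAlgebra Q.toQuasiBialgebra B)
    (v : H →ₐ[k] B) (hv : IsComodAlgMorphismFromH R v)
    (E : B →ₗ[k] B) (hE : IsCanonicalProjection Q R v E) (b : B) (h : H) :
    E (b * v h) = Q.counit h • E b := by
  rw [auxE_eq Q R v hv E hE, auxE_eq Q R v hv E hE b, map_mul R.coact, map_mul (auxJ k H B),
    hv.1, ← mul_assoc, auxD3_right]

/-- `id ⊗ ε`. -/
noncomputable def auxEpsR (Q : QuasiHopfAlgebra k H) (B : Type*) [Ring B] [Algebra k B] :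
    B ⊗[k] H →ₐ[k] B :=
  (Algebra.TensorProduct.rid k k B).toAlgHom.comp
    (Algebra.TensorProduct.map (AlgHom.id k B) Q.counit)

theorem auxEpsR_tmul (Q : QuasiHopfAlgebra k H) (b : B) (h : H) :
    auxEpsR Q B (b ⊗ₜ[k] h) = Q.counit h • b := by
  simp [auxEpsR]

theorem auxEpsR_coact (Q : QuasiHopfAlgebra k H)
    (R : RightComoduleAlgebra Q.toQuasiBialgebra B) (b : B) :
    auxEpsR Q B (R.coact b) = b := by
  simp [auxEpsR, R.counit_coact]

/-- `id ⊗ ε ⊗ id`. -/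
noncomputable def auxEpsM (Q : QuasiHopfAlgebra k H) (B : Type*) [Ring B] [Algebra k B] :
    B ⊗[k] (H ⊗[k] H) →ₐ[k] B ⊗[k] H :=
  Algebra.TensorProduct.map (AlgHom.id k B) (auxEps1 Q H)

theorem auxEpsM_tmul (Q : QuasiHopfAlgebra k H) (b : B) (x y : H) :
    auxEpsM Q B (b ⊗ₜ[k] (x ⊗ₜ[k] y)) = Q.counit x • (b ⊗ₜ[k] y) := by
  simp [auxEpsM, auxEps1_tmul]

theorem auxEpsM_PhiRho (Q : QuasiHopfAlgebra k H)
    (R : RightComoduleAlgebra Q.toQuasiBialgebra B) :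
    auxEpsM Q B R.PhiRho = 1 := by
  have h := congrArg (Algebra.TensorProduct.map (AlgHom.id k B)
    (Algebra.TensorProduct.lid k H).toAlgHom) R.counit_PhiRho_mid
  rw [map_one] at h
  rw [← h]
  generalize R.PhiRho = T
  induction T using aux_ind3 with
  | zero => simp
  | add x y hx hy => simp only [map_add, hx, hy]
  | tmul a b c => simp [auxEpsM_tmul]

/-- `id ⊗ id ⊗ ε`. -/
noncomputable def auxEpsL (Q : QuasiHopfAlgebra k H) (B : Type*) [Ring B] [Algebra k B] :
    B ⊗[k] (H ⊗[k] H) →ₐ[k] B ⊗[k] H :=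
  Algebra.TensorProduct.map (AlgHom.id k B) (auxEpsR Q H)

theorem auxEpsL_tmul (Q : QuasiHopfAlgebra k H) (b : B) (x y : H) :
    auxEpsL Q B (b ⊗ₜ[k] (x ⊗ₜ[k] y)) = Q.counit y • (b ⊗ₜ[k] x) := by
  simp [auxEpsL, auxEpsR_tmul]

theorem auxEpsL_PhiRho (Q : QuasiHopfAlgebra k H)
    (R : RightComoduleAlgebra Q.toQuasiBialgebra B) :
    auxEpsL Q B R.PhiRho = 1 := by
  have h := congrArg (Algebra.TensorProduct.map (AlgHom.id k B)
    (Algebra.TensorProduct.rid k k H).toAlgHom) R.counit_PhiRho_right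
  rw [map_one] at h
  rw [← h]
  generalize R.PhiRho = T
  induction T using aux_ind3 with
  | zero => simp
  | add x y hx hy => simp only [map_add, hx, hy]
  | tmul a b c => simp [auxEpsL_tmul]

theorem auxEpsL_PhiRhoInv (Q : QuasiHopfAlgebra k H)
    (R : RightComoduleAlgebra Q.toQuasiBialgebra B) :
    auxEpsL Q B R.PhiRhoInv = 1 := by
  have h := congrArg (auxEpsL Q B) R.PhiRho_mul_inv
  rwa [map_mul, auxEpsL_PhiRho, one_mul, map_one] at h

/-- Property (b): `E(c E(b)) = E(c b)`. -/
theorem auxE_mul_E (Q : QuasiHopfAlgebra k H)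
    (R : RightComoduleAlgebra Q.toQuasiBialgebra B)
    (v : H →ₐ[k] B) (hv : IsComodAlgMorphismFromH R v)
    (E : B →ₗ[k] B) (hE : IsCanonicalProjection Q R v E) (c b : B) :
    E (c * E b) = E (c * b) := by
  have key : ∀ T : B ⊗[k] (H ⊗[k] H),
      E (c * auxD3 Q v T) = E (c * auxEpsR Q B (auxEpsM Q B T)) := by
    intro T
    induction T using aux_ind3 with
    | zero => simp
    | add x y hx hy => simp only [map_add, mul_add, hx, hy]
    | tmul d x y =>
      rw [auxD3_tmul, ← mul_assoc, auxE_mul_v Q R v hv E hE]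
      simp [auxEpsM_tmul, auxEpsR_tmul, aux_counit_S, Q.counit_alpha, Q.counit_beta, mul_smul]
  have key2 : ∀ T : B ⊗[k] H, auxEpsR Q B (auxEpsM Q B (auxJ k H B T)) = auxEpsR Q B T := by
    intro T
    induction T using TensorProduct.induction_on with
    | zero => simp
    | add x y hx hy => simp only [map_add, hx, hy]
    | tmul d x => simp [auxJ_tmul, auxEpsM_tmul, auxEpsR_tmul]
  rw [auxE_eq Q R v hv E hE b, key, map_mul (auxEpsM Q B), auxEpsM_PhiRho, one_mul, key2, auxEpsR_coact]

/-- `assoc ∘ (ρ ⊗ id)`. -/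
noncomputable def auxRho1 {Q : QuasiHopfAlgebra k H}
    (R : RightComoduleAlgebra Q.toQuasiBialgebra B) (M : Type*) [Ring M] [Algebra k M] :
    B ⊗[k] M →ₐ[k] B ⊗[k] (H ⊗[k] M) :=
  (Algebra.TensorProduct.assoc k k k B H M).toAlgHom.comp
    (Algebra.TensorProduct.map R.coact (AlgHom.id k M))

/-- Tensor a fixed right factor: `(b ⊗ h) ↦ b ⊗ (h ⊗ m)`. -/
theorem auxRho1_tmul {Q : QuasiHopfAlgebra k H}
    (R : RightComoduleAlgebra Q.toQuasiBialgebra B) {M : Type*} [Ring M] [Algebra k M]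
    (b : B) (m : M) : auxRho1 R M (b ⊗ₜ[k] m)
      = Algebra.TensorProduct.assoc k k k B H M (R.coact b ⊗ₜ[k] m) := by
  simp [auxRho1]

theorem auxRho1_coact {Q : QuasiHopfAlgebra k H}
    (R : RightComoduleAlgebra Q.toQuasiBialgebra B) (b : B) :
    auxRho1 R H (R.coact b) = R.PhiRhoInv *
      (Algebra.TensorProduct.map (AlgHom.id k B) Q.comul (R.coact b)) * R.PhiRho := by
  have h := R.coact_coassoc b
  rw [mul_assoc, ← h, ← mul_assoc, R.inv_mul_PhiRho, one_mul]
  rfl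

/-- Multiplying with a left-comultiplied element inside `auxDL`. -/
theorem auxDL_mul (Q : QuasiHopfAlgebra k H) (U : H ⊗[k] H) (x y : H) :
    auxDL Q (U * (x ⊗ₜ[k] y)) = Q.S x * auxDL Q U * y := by
  induction U using TensorProduct.induction_on with
  | zero => simp
  | add a b ha hb => simp only [map_add, add_mul, mul_add, ha, hb]
  | tmul a b => simp [auxDL_tmul, Q.S_mul, mul_assoc]

theorem auxD3_left (Q : QuasiHopfAlgebra k H) (v : H →ₐ[k] B) (c : B) (h : H)
    (T : B ⊗[k] (H ⊗[k] H)) :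
    auxD3 Q v ((c ⊗ₜ[k] Q.comul h) * T) = Q.counit h • (c * auxD3 Q v T) := by
  induction T using aux_ind3 with
  | zero => simp
  | add a b ha hb => simp only [map_add, mul_add, smul_add, ha, hb]
  | tmul b x y =>
    rw [Algebra.TensorProduct.tmul_mul_tmul, auxD3_tmul', auxDL_mul, auxDL_comul, auxD3_tmul]
    simp [mul_assoc]

/-- Property (c): `E(b₀) v(b₁) = b`. -/
theorem auxE_recon (Q : QuasiHopfAlgebra k H)
    (R : RightComoduleAlgebra Q.toQuasiBialgebra B)
    (v : H →ₐ[k] B) (hv : IsComodAlgMorphismFromH R v)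
    (E : B →ₗ[k] B) (hE : IsCanonicalProjection Q R v E) (b : B) :
    LinearMap.mul' k B (TensorProduct.map E v.toLinearMap (R.coact b)) = b := by
  have key0 : ∀ (T : B ⊗[k] (H ⊗[k] H)) (W : B ⊗[k] H) (h : H),
      auxD3 Q v (T * auxJ k H B W) * v h =
      auxD3 Q v (T * Algebra.TensorProduct.assoc k k k B H H (W ⊗ₜ[k] h)) := by
    intro T W h
    induction W using TensorProduct.induction_on with
    | zero => simp
    | add x y hx hy => simp only [map_add, mul_add, add_mul, TensorProduct.add_tmul, hx, hy]
    | tmul d x =>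
      induction T using aux_ind3 with
      | zero => simp
      | add x y hx hy => simp only [map_add, add_mul, hx, hy]
      | tmul e y z => simp [auxJ_tmul, auxD3_tmul, mul_assoc]
  have key : ∀ W : B ⊗[k] H, LinearMap.mul' k B (TensorProduct.map E v.toLinearMap W)
      = auxD3 Q v (R.PhiRho * auxRho1 R H W) := by
    intro W
    induction W using TensorProduct.induction_on with
    | zero => simp
    | add x y hx hy => simp only [map_add, mul_add, hx, hy]
    | tmul d x =>
      rw [auxRho1_tmul, ← key0, ← auxE_eq Q R v hv E hE]
      simp
  have key2 : ∀ W : B ⊗[k] H, auxD3 Q v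
      ((Algebra.TensorProduct.map (AlgHom.id k B) Q.comul W) * R.PhiRho) = auxEpsR Q B W := by
    intro W
    induction W using TensorProduct.induction_on with
    | zero => simp
    | add x y hx hy => simp only [map_add, add_mul, hx, hy]
    | tmul d x =>
      rw [Algebra.TensorProduct.map_tmul, auxD3_left, auxD3_PhiRho Q R v hv, auxEpsR_tmul]
      simp
  rw [key, auxRho1_coact, ← mul_assoc, ← mul_assoc, R.PhiRho_mul_inv, one_mul, key2,
    auxEpsR_coact]

set_option maxSynthPendingDepth 8
set_option synthInstance.maxHeartbeats 400000
set_option maxHeartbeats 1000000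

/-- `b ⊗ x ⊗ y ↦ b ⊗ x ⊗ y ⊗ 1`. -/
noncomputable def auxJ3 (k H B : Type*) [Field k] [Ring H] [Algebra k H] [Ring B] [Algebra k B] :
    B ⊗[k] (H ⊗[k] H) →ₐ[k] B ⊗[k] (H ⊗[k] (H ⊗[k] H)) :=
  Algebra.TensorProduct.map (AlgHom.id k B)
    (Algebra.TensorProduct.map (AlgHom.id k H)
      (Algebra.TensorProduct.includeLeft : H →ₐ[k] H ⊗[k] H))

theorem auxJ3_tmul (b : B) (t : H ⊗[k] H) :
    auxJ3 k H B (b ⊗ₜ[k] t) = b ⊗ₜ[k] (auxJ k H H t) := by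
  simp [auxJ3, auxJ]

/-- `id ⊗ Δ ⊗ id`. -/
noncomputable def auxDel2 (Q : QuasiHopfAlgebra k H) (B : Type*) [Ring B] [Algebra k B] :
    B ⊗[k] (H ⊗[k] H) →ₐ[k] B ⊗[k] (H ⊗[k] (H ⊗[k] H)) :=
  Algebra.TensorProduct.map (AlgHom.id k B)
          (((Algebra.TensorProduct.assoc k k k H H H).toAlgHom).comp
            (Algebra.TensorProduct.map Q.comul (AlgHom.id k H)))

theorem auxDel2_tmul (Q : QuasiHopfAlgebra k H) (b : B) (x y : H) :
    auxDel2 Q B (b ⊗ₜ[k] (x ⊗ₜ[k] y)) =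
      b ⊗ₜ[k] (auxJ k H H (Q.comul x) * (1 ⊗ₜ[k] (1 ⊗ₜ[k] y))) := by
  have key : ∀ U : H ⊗[k] H, Algebra.TensorProduct.assoc k k k H H H (U ⊗ₜ[k] y) =
      auxJ k H H U * (1 ⊗ₜ[k] (1 ⊗ₜ[k] y)) := by
    intro U
    induction U using TensorProduct.induction_on with
    | zero => simp
    | add a b ha hb => simp only [map_add, TensorProduct.add_tmul, add_mul, ha, hb]
    | tmul a b => simp [auxJ_tmul]
  rw [← key]
  simp [auxDel2]

/-- `id ⊗ id ⊗ Δ`. -/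
noncomputable def auxDel3 (Q : QuasiHopfAlgebra k H) (B : Type*) [Ring B] [Algebra k B] :
    B ⊗[k] (H ⊗[k] H) →ₐ[k] B ⊗[k] (H ⊗[k] (H ⊗[k] H)) :=
  Algebra.TensorProduct.map (AlgHom.id k B)
          (Algebra.TensorProduct.map (AlgHom.id k H) Q.comul)

theorem auxDel3_tmul (Q : QuasiHopfAlgebra k H) (b : B) (x y : H) :
    auxDel3 Q B (b ⊗ₜ[k] (x ⊗ₜ[k] y)) = b ⊗ₜ[k] (x ⊗ₜ[k] Q.comul y) := by
  simp [auxDel3]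

theorem auxRho1_PhiRho {Q : QuasiHopfAlgebra k H}
    (R : RightComoduleAlgebra Q.toQuasiBialgebra B) :
    auxRho1 R (H ⊗[k] H) R.PhiRho = auxDel3 Q B R.PhiRhoInv *
      (((1 : B) ⊗ₜ[k] Q.Phi) * auxDel2 Q B R.PhiRho * auxJ3 k H B R.PhiRho) := by
  have h : ((1 : B) ⊗ₜ[k] Q.Phi) * auxDel2 Q B R.PhiRho * auxJ3 k H B R.PhiRho
      = auxDel3 Q B R.PhiRho * auxRho1 R (H ⊗[k] H) R.PhiRho := R.pentagon
  rw [h, ← mul_assoc, ← map_mul, R.inv_mul_PhiRho, map_one, one_mul]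

theorem auxRho1_J {Q : QuasiHopfAlgebra k H}
    (R : RightComoduleAlgebra Q.toQuasiBialgebra B) (W : B ⊗[k] H) :
    auxRho1 R (H ⊗[k] H) (auxJ k H B W) = auxJ3 k H B (auxRho1 R H W) := by
  induction W using TensorProduct.induction_on with
  | zero => simp
  | add a b ha hb => simp only [map_add, ha, hb]
  | tmul b h =>
    rw [auxJ_tmul, auxRho1_tmul, auxRho1_tmul]
    generalize R.coact b = U
    induction U using TensorProduct.induction_on with
    | zero => simp
    | add a b ha hb => simp only [map_add, TensorProduct.add_tmul, ha, hb]
    | tmul a b => simp [auxJ3_tmul, auxJ_tmul]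

/-- Property (d): `E(E(b)₀) ⊗ E(b)₁ = E(b) ⊗ 1`. -/
theorem auxE_coinv (Q : QuasiHopfAlgebra k H)
    (R : RightComoduleAlgebra Q.toQuasiBialgebra B)
    (v : H →ₐ[k] B) (hv : IsComodAlgMorphismFromH R v)
    (E : B →ₗ[k] B) (hE : IsCanonicalProjection Q R v E) (b : B) :
    TensorProduct.map E (LinearMap.id : H →ₗ[k] H) (R.coact (E b)) = E b ⊗ₜ[k] 1 := by
  have hEv := auxE_mul_v Q R v hv E hE
  set G : B ⊗[k] (H ⊗[k] (H ⊗[k] H)) →ₗ[k] B ⊗[k] H :=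
    TensorProduct.map E (auxD3 Q (AlgHom.id k H)) with hG
  have hGt : ∀ (c : B) (w : H ⊗[k] (H ⊗[k] H)),
      G (c ⊗ₜ[k] w) = E c ⊗ₜ[k] auxD3 Q (AlgHom.id k H) w := fun c w => by
    simp [hG]
  have L1 : ∀ (W : B ⊗[k] H) (U : H ⊗[k] H),
      TensorProduct.map E (LinearMap.id : H →ₗ[k] H)
        (W * Algebra.TensorProduct.map v (AlgHom.id k H) U)
      = TensorProduct.map E (LinearMap.id : H →ₗ[k] H) W
        * ((1 : B) ⊗ₜ[k] auxEps1 Q H U) := by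
    intro W U
    induction U using TensorProduct.induction_on with
    | zero => simp
    | add a b ha hb => simp only [map_add, TensorProduct.tmul_add, mul_add, ha, hb]
    | tmul p r =>
      induction W using TensorProduct.induction_on with
      | zero => simp
      | add a b ha hb => simp only [map_add, add_mul, ha, hb]
      | tmul c x => simp [hEv, auxEps1_tmul, TensorProduct.smul_tmul']
  have L2 : ∀ T : B ⊗[k] (H ⊗[k] H),
      TensorProduct.map E (LinearMap.id : H →ₗ[k] H) (R.coact (auxD3 Q v T))
        = G (auxRho1 R (H ⊗[k] H) T) := by
    intro T
    induction T using aux_ind3 with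
    | zero => simp
    | add a b ha hb => simp only [map_add, ha, hb]
    | tmul c x y =>
      rw [auxD3_tmul, map_mul, hv.1, L1, auxEps1_comul, auxRho1_tmul]
      generalize R.coact c = U
      induction U using TensorProduct.induction_on with
      | zero => simp
      | add a b ha hb => simp only [map_add, TensorProduct.add_tmul, add_mul, ha, hb]
      | tmul a b => simp [hGt, auxD3_tmul]
  have S1 : ∀ (W : B ⊗[k] (H ⊗[k] (H ⊗[k] H))) (U : H ⊗[k] (H ⊗[k] H)),
      G (W * auxJ3 k H B (Algebra.TensorProduct.map v (AlgHom.id k (H ⊗[k] H)) U))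
        = G (W * ((1 : B) ⊗ₜ[k] auxJ k H H (auxEps1 Q (H ⊗[k] H) U))) := by
    intro W U
    induction U using TensorProduct.induction_on with
    | zero => simp
    | add a b ha hb => simp only [map_add, mul_add, TensorProduct.tmul_add, ha, hb]
    | tmul p r =>
      induction W using TensorProduct.induction_on with
      | zero => simp
      | add a b ha hb => simp only [map_add, add_mul, ha, hb]
      | tmul c x => simp [hEv, hGt, auxJ3_tmul, auxEps1_tmul, TensorProduct.smul_tmul']
  have S2 : ∀ (W : B ⊗[k] (H ⊗[k] (H ⊗[k] H))) (V : B ⊗[k] H),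
      G (W * auxJ3 k H B (Algebra.TensorProduct.map (AlgHom.id k B) Q.comul V))
        = G (W * (auxEpsR Q B V ⊗ₜ[k] 1)) := by
    intro W V
    induction V using TensorProduct.induction_on with
    | zero => simp
    | add a b ha hb => simp only [map_add, mul_add, TensorProduct.add_tmul, ha, hb]
    | tmul p r =>
      induction W using TensorProduct.induction_on with
      | zero => simp
      | add a b ha hb => simp only [map_add, add_mul, ha, hb]
      | tmul c x =>
        simp [hGt, auxJ3_tmul, auxEpsR_tmul, auxD3_right_id, TensorProduct.smul_tmul']
  have hy : ∀ (w : H ⊗[k] (H ⊗[k] H)) (y : H), auxD3 Q (AlgHom.id k H)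
      (w * (1 ⊗ₜ[k] (1 ⊗ₜ[k] y))) = auxD3 Q (AlgHom.id k H) w * y := by
    intro w y
    induction w using aux_ind3 with
    | zero => simp
    | add a b ha hb => simp only [map_add, add_mul, ha, hb]
    | tmul p q r => simp [auxD3_tmul, mul_assoc]
  have S3 : ∀ (W : B ⊗[k] (H ⊗[k] (H ⊗[k] H))) (V : B ⊗[k] (H ⊗[k] H)),
      G (W * auxDel2 Q B V * (b ⊗ₜ[k] 1))
        = G (W * Algebra.TensorProduct.map (AlgHom.id k B)
          ((Algebra.TensorProduct.includeRight : H ⊗[k] H →ₐ[k] H ⊗[k] (H ⊗[k] H)).comp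
            (Algebra.TensorProduct.includeRight : H →ₐ[k] H ⊗[k] H)) (auxEpsM Q B V)
            * (b ⊗ₜ[k] 1)) := by
    intro W V
    induction V using aux_ind3 with
    | zero => simp
    | add a b ha hb => simp only [map_add, mul_add, add_mul, ha, hb]
    | tmul p x y =>
      induction W using TensorProduct.induction_on with
      | zero => simp
      | add a b ha hb => simp only [map_add, add_mul, ha, hb]
      | tmul c w =>
        rw [auxDel2_tmul, auxEpsM_tmul]
        simp only [map_smul, Algebra.TensorProduct.map_tmul, AlgHom.coe_id, id_eq,
          AlgHom.comp_apply, Algebra.TensorProduct.includeRight_apply,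
          Algebra.TensorProduct.tmul_mul_tmul, mul_one, mul_smul_comm, smul_mul_assoc, hGt]
        rw [← mul_assoc, hy, hy, auxD3_right_id]
        simp
  have S4 : ∀ (V : B ⊗[k] (H ⊗[k] H)),
      G (auxDel3 Q B V * ((1 : B) ⊗ₜ[k] Q.Phi) * (b ⊗ₜ[k] 1))
        = TensorProduct.map E (LinearMap.id : H →ₗ[k] H) (auxEpsL Q B V * (b ⊗ₜ[k] 1)) := by
    intro V
    induction V using aux_ind3 with
    | zero => simp
    | add a b ha hb => simp only [map_add, add_mul, ha, hb]
    | tmul c x y =>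
      rw [auxDel3_tmul, auxEpsL_tmul]
      simp only [Algebra.TensorProduct.tmul_mul_tmul, mul_one, hGt, smul_mul_assoc, map_smul,
        TensorProduct.map_tmul, LinearMap.id_apply]
      rw [auxD3_left, auxD3_Phi]
      simp
  have harg : auxRho1 R (H ⊗[k] H) (R.PhiRho * auxJ k H B (R.coact b)) =
      auxDel3 Q B R.PhiRhoInv * ((1 : B) ⊗ₜ[k] Q.Phi) * auxDel2 Q B R.PhiRho
        * auxJ3 k H B (Algebra.TensorProduct.map (AlgHom.id k B) Q.comul (R.coact b))
        * auxJ3 k H B R.PhiRho := by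
    have hi : auxJ3 k H B R.PhiRho * auxJ3 k H B R.PhiRhoInv = 1 := by
      rw [← map_mul, R.PhiRho_mul_inv, map_one]
    rw [map_mul, auxRho1_J, auxRho1_coact, auxRho1_PhiRho, map_mul, map_mul]
    simp only [mul_assoc]
    rw [← mul_assoc (auxJ3 k H B R.PhiRho) (auxJ3 k H B R.PhiRhoInv), hi, one_mul]
  have hS1 : ∀ W, G (W * auxJ3 k H B R.PhiRho) = G W := by
    intro W
    rw [hv.2, S1, auxEps1_Phi, map_one, ← Algebra.TensorProduct.one_def, mul_one]
  conv_lhs => rw [auxE_eq Q R v hv E hE b]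
  rw [L2, harg, hS1, S2, auxEpsR_coact, S3, auxEpsM_PhiRho, map_one, mul_one, S4,
    auxEpsL_PhiRhoInv, one_mul, TensorProduct.map_tmul, LinearMap.id_apply]

/-- `E(b)₀ ⊗ E(b)₁ = E(v(x¹) E(b)) v(x²) ⊗ x³`. -/
theorem auxE_coact (Q : QuasiHopfAlgebra k H)
    (R : RightComoduleAlgebra Q.toQuasiBialgebra B)
    (v : H →ₐ[k] B) (hv : IsComodAlgMorphismFromH R v)
    (E : B →ₗ[k] B) (hE : IsCanonicalProjection Q R v E) (a : B) (ha : a ∈ LinearMap.range E)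
    (n : ℕ) (t1 t2 t3 : Fin n → H)
    (ht : Q.PhiInv = ∑ i, t1 i ⊗ₜ[k] (t2 i ⊗ₜ[k] t3 i)) :
    R.coact a = ∑ i, (E (v (t1 i) * a) * v (t2 i)) ⊗ₜ[k] t3 i := by
  obtain ⟨b, rfl⟩ := ha
  have hEv := auxE_mul_v Q R v hv E hE
  set K : B ⊗[k] (H ⊗[k] H) →ₗ[k] B ⊗[k] H :=
    (TensorProduct.map (LinearMap.mul' k B ∘ₗ TensorProduct.map E v.toLinearMap)
      (LinearMap.id : H →ₗ[k] H)) ∘ₗ (TensorProduct.assoc k B H H).symm.toLinearMap with hK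
  have hKt : ∀ (c : B) (x y : H), K (c ⊗ₜ[k] (x ⊗ₜ[k] y)) = (E c * v x) ⊗ₜ[k] y := by
    intro c x y; simp [hK]
  have hKa : ∀ (W : B ⊗[k] H) (y : H),
      K (Algebra.TensorProduct.assoc k k k B H H (W ⊗ₜ[k] y))
      = LinearMap.mul' k B (TensorProduct.map E v.toLinearMap W) ⊗ₜ[k] y := by
    intro W y
    induction W using TensorProduct.induction_on with
    | zero => simp
    | add a b ha hb => simp only [map_add, TensorProduct.add_tmul, ha, hb]
    | tmul c x => simp [hKt]
  have K1 : ∀ W : B ⊗[k] H, K (auxRho1 R H W) = W := by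
    intro W
    induction W using TensorProduct.induction_on with
    | zero => simp
    | add a b ha hb => simp only [map_add, ha, hb]
    | tmul c x => rw [auxRho1_tmul, hKa, auxE_recon Q R v hv E hE]
  have K2 : ∀ (T : B ⊗[k] (H ⊗[k] H)) (U : H ⊗[k] (H ⊗[k] H)),
      K (T * Algebra.TensorProduct.map v (AlgHom.id k (H ⊗[k] H)) U)
        = K (T * ((1 : B) ⊗ₜ[k] auxEps1 Q (H ⊗[k] H) U)) := by
    intro T U
    induction U using aux_ind3 with
    | zero => simp
    | add a b ha hb => simp only [map_add, mul_add, TensorProduct.tmul_add, ha, hb]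
    | tmul p q r =>
      induction T using aux_ind3 with
      | zero => simp
      | add a b ha hb => simp only [map_add, add_mul, ha, hb]
      | tmul c x y => simp [hEv, hKt, auxEps1_tmul, TensorProduct.smul_tmul']
  have K3 : ∀ (U : H ⊗[k] (H ⊗[k] H)) (W : B ⊗[k] H),
      K (Algebra.TensorProduct.map v (AlgHom.id k (H ⊗[k] H)) U
          * Algebra.TensorProduct.map (AlgHom.id k B) Q.comul W)
        = K (Algebra.TensorProduct.map v (AlgHom.id k (H ⊗[k] H)) U
          * Algebra.TensorProduct.map (AlgHom.id k B) Q.comul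
            (TensorProduct.map E (LinearMap.id : H →ₗ[k] H) W)) := by
    intro U W
    induction W using TensorProduct.induction_on with
    | zero => simp
    | add a b ha hb => simp only [map_add, mul_add, ha, hb]
    | tmul c h =>
      simp only [Algebra.TensorProduct.map_tmul, TensorProduct.map_tmul, AlgHom.coe_id, id_eq,
        LinearMap.id_apply]
      generalize Q.comul h = D
      induction U using aux_ind3 with
      | zero => simp
      | add a b ha hb => simp only [map_add, add_mul, ha, hb]
      | tmul p q r =>
        induction D using TensorProduct.induction_on with
        | zero => simp
        | add a b ha hb => simp only [map_add, mul_add, TensorProduct.tmul_add, ha, hb]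
        | tmul x y => simp [hKt, auxE_mul_E Q R v hv E hE]
  have hinv : R.PhiRhoInv = Algebra.TensorProduct.map v (AlgHom.id k (H ⊗[k] H)) Q.PhiInv := by
    refine left_inv_eq_right_inv R.inv_mul_PhiRho ?_
    rw [hv.2, ← map_mul, Q.Phi_mul_inv, map_one]
  rw [← K1 (R.coact (E b)), auxRho1_coact]
  conv_lhs => rw [hv.2]
  rw [K2, auxEps1_Phi, ← Algebra.TensorProduct.one_def, mul_one, hinv, K3,
    auxE_coinv Q R v hv E hE, ht]
  simp [Finset.sum_mul, hKt, Algebra.TensorProduct.one_def]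

end Helpers

/-- The explicit formula for the multiplication `a * a' = E(aa')` of the coinvariants:
`a * a' = v(q¹)(t¹ ▷ a)v(t²)(z¹ ▷ a')v(z²βS(q²t³z³))`, where `t, z` are two copies of
`Φ⁻¹` and `q_R = X¹ ⊗ S⁻¹(αX³)X²`. -/
theorem statement11 {k H B : Type*} [Field k] [Ring H] [Algebra k H]
    [Ring B] [Algebra k B] (Q : QuasiHopfAlgebra k H)
    (R : RightComoduleAlgebra Q.toQuasiBialgebra B)
    (v : H →ₐ[k] B) (hv : IsComodAlgMorphismFromH R v)
    (E : B →ₗ[k] B) (hE : IsCanonicalProjection Q R v E) :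
    ∀ a ∈ LinearMap.range E, ∀ a' ∈ LinearMap.range E,
    ∀ (nq : ℕ) (X1 X2 X3 : Fin nq → H),
      Q.Phi = ∑ i, X1 i ⊗ₜ[k] (X2 i ⊗ₜ[k] X3 i) →
    ∀ (nt : ℕ) (t1 t2 t3 : Fin nt → H),
      Q.PhiInv = ∑ i, t1 i ⊗ₜ[k] (t2 i ⊗ₜ[k] t3 i) →
    ∀ (nz : ℕ) (z1 z2 z3 : Fin nz → H),
      Q.PhiInv = ∑ i, z1 i ⊗ₜ[k] (z2 i ⊗ₜ[k] z3 i) →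
    E (a * a')
      = ∑ i, ∑ it, ∑ iz,
          v (X1 i) * E (v (t1 it) * a) * v (t2 it) * E (v (z1 iz) * a')
            * v (z2 iz * Q.beta
                * Q.S (Q.Sinv (Q.alpha * X3 i) * X2 i * t3 it * z3 iz)) := by
  intro a ha c hc nq X1 X2 X3 hX nt t1 t2 t3 ht nz z1 z2 z3 hz
  rw [auxE_eq Q R v hv E hE, map_mul R.coact, auxE_coact Q R v hv E hE a ha nt t1 t2 t3 ht,
    auxE_coact Q R v hv E hE c hc nz z1 z2 z3 hz, hv.2, hX, Finset.sum_mul_sum]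
  simp only [map_sum, Finset.sum_mul, Finset.mul_sum, Algebra.TensorProduct.map_tmul,
    Algebra.TensorProduct.tmul_mul_tmul, auxJ_tmul, auxD3_tmul, AlgHom.coe_id, id_eq, mul_one]
  rw [Finset.sum_congr rfl fun _ _ => Finset.sum_comm, Finset.sum_comm]
  simp [Q.S_mul, Q.S_Sinv, mul_assoc]
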